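/- Let (ρ, m, E, B) be a solution of the monolithic-regularized ideal MHD system on ℝ^d × (0,∞) with ρ > 0, twice continuously differentiable in space and continuously differentiable in time, with ∇·B = 0. Let S : ℝ² → ℝ be twice continuously differentiable with p·S_e(ρ,e) + ρ²·S_ρ(ρ,e) = 0 pointwise, and assume that along the solution S_e > 0, ∂_ρ(ρ² S_ρ) < 0, S_ee < 0, and ∂_ρ(ρ² S_ρ)·S_ee − ρ² S_ρe² > 0. Then s(x,t) := S(ρ(x,t), e(x,t)) satisfies the pointwise differential inequality ρ(∂_t s + u·∇s) − ∇·(ε ρ ∇s) − ε ∇ρ·∇s ≥ 0. -/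

import Mathlib

open scoped BigOperators

/-- Spatial partial derivative `∂_i f (x)` of a scalar field on `ℝ^d`. -/
noncomputable def spd {d : ℕ} (f : (Fin d → ℝ) → ℝ) (i : Fin d) (x : Fin d → ℝ) : ℝ :=
  fderiv ℝ f x (Pi.single i 1)

/-- Laplacian `Δf(x) = ∑ᵢ ∂ᵢ∂ᵢ f (x)` of a scalar field on `ℝ^d`. -/
noncomputable def slap {d : ℕ} (f : (Fin d → ℝ) → ℝ) (x : Fin d → ℝ) : ℝ :=
  ∑ i, spd (spd f i) i x

/-- The Maxwell stress tensor `𝒯 = B ⊗ B − (|B|²/2) I` built from a vector `B ∈ ℝ^d`. -/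
noncomputable def maxwellT {d : ℕ} (B : Fin d → ℝ) (i j : Fin d) : ℝ :=
  B i * B j - (if i = j then (∑ k, (B k) ^ 2) / 2 else 0)

/-- Specific internal energy `e = (E − ρ|u|²/2 − |B|²/2)/ρ` with `u = m/ρ`,
as a space-time field. -/
noncomputable def specE {d : ℕ} (ρ E : (Fin d → ℝ) → ℝ → ℝ)
    (m B : (Fin d → ℝ) → ℝ → Fin d → ℝ) (x : Fin d → ℝ) (t : ℝ) : ℝ :=
  (E x t - ρ x t * (∑ i, (m x t i / ρ x t) ^ 2) / 2 - (∑ i, (B x t i) ^ 2) / 2) / ρ x t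

/-- Partial derivative of `S(ρ,e)` in the first argument `ρ`. -/
noncomputable def Sd1 (S : ℝ × ℝ → ℝ) (q : ℝ × ℝ) : ℝ := fderiv ℝ S q (1, 0)

/-- Partial derivative of `S(ρ,e)` in the second argument `e`. -/
noncomputable def Sd2 (S : ℝ × ℝ → ℝ) (q : ℝ × ℝ) : ℝ := fderiv ℝ S q (0, 1)

/-! The operator `D f = ∂ₜf + u · ∇f - ε Δf` obeys a chain rule with a defect that is quadratic in
the spatial gradients. In terms of `D` the conservation laws become equations for `ρ D u`, `D B` and
`ρ D e`, and those defects become the heat source `ε (ρ|∇u|² + |∇B|²)`. In `ρ D S(ρ, e)` the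
equation of state cancels the compression work `p ∇ · u`; what remains is the nonnegative
dissipation `ε S_e (ρ|∇u|² + |∇B|²)` minus `ε` times a quadratic form in `(∇ρ, ∇e)` that the
convexity of `-S` makes negative semidefinite. -/

section Calculus

variable {E ι : Type*} [NormedAddCommGroup E] [NormedSpace ℝ E] [Fintype ι] {f g : E → ℝ}
  {F G : E → ι → ℝ} {S : ℝ × ℝ → ℝ} {x : E}

lemma quadraticForm_nonpos {R : Type*} [CommRing R] [LinearOrder R] [IsStrictOrderedRing R]
    {a b c : R} (ha : a ≤ 0) (hc : c ≤ 0) (hdet : b ^ 2 ≤ a * c) (r s : R) :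
    a * (r * r) + 2 * b * (r * s) + c * (s * s) ≤ 0 := by
  rcases ha.lt_or_eq with ha | rfl
  · refine nonpos_of_mul_nonneg_right ?_ ha
    calc 0 ≤ (a * r + b * s) ^ 2 + (a * c - b ^ 2) * s ^ 2 :=
          add_nonneg (sq_nonneg _) (mul_nonneg (sub_nonneg.2 hdet) (sq_nonneg s))
      _ = a * (a * (r * r) + 2 * b * (r * s) + c * (s * s)) := by ring
  · have hb : b = 0 := by simpa using hdet
    simpa [hb] using mul_nonpos_of_nonpos_of_nonneg hc (mul_self_nonneg s)

lemma differentiableAt_fderiv_apply (hf : ContDiffAt ℝ 2 f x) (v : E) :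
    DifferentiableAt ℝ (fun y => fderiv ℝ f y v) x :=
  ((hf.fderiv_right (m := 1) (by norm_num)).differentiableAt one_ne_zero).clm_apply
    (differentiableAt_const _)

lemma fderiv_dotProduct (hF : ∀ k, DifferentiableAt ℝ (fun y => F y k) x)
    (hG : ∀ k, DifferentiableAt ℝ (fun y => G y k) x) (w : E) :
    fderiv ℝ (fun y => F y ⬝ᵥ G y) x w
      = ∑ k, F x k * fderiv ℝ (fun y => G y k) x w
        + ∑ k, G x k * fderiv ℝ (fun y => F y k) x w := by
  have (k : ι) : DifferentiableAt ℝ (fun y => F y k * G y k) x := (hF k).fun_mul (hG k)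
  simp [dotProduct, fderiv_fun_sum fun k _ => this k, fderiv_fun_mul (hF _) (hG _),
    Finset.sum_add_distrib]

/-- `½|v|²`, for kinetic and magnetic energy densities. -/
noncomputable def halfNormSq (v : ι → ℝ) : ℝ :=
  (∑ k, v k ^ 2) / 2

lemma differentiableAt_halfNormSq (hF : ∀ k, DifferentiableAt ℝ (fun y => F y k) x) :
    DifferentiableAt ℝ (fun y => halfNormSq (F y)) x := by
  unfold halfNormSq
  fun_prop

lemma halfNormSq_add_self (v : ι → ℝ) : halfNormSq v + halfNormSq v = v ⬝ᵥ v := by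
  simp [halfNormSq, dotProduct, sq]

lemma fderiv_halfNormSq (hF : ∀ k, DifferentiableAt ℝ (fun y => F y k) x) (w : E) :
    fderiv ℝ (fun y => halfNormSq (F y)) x w = ∑ k, F x k * fderiv ℝ (fun y => F y k) x w := by
  have hN := differentiableAt_halfNormSq hF
  have doubled := fderiv_dotProduct hF hF w
  simp only [← halfNormSq_add_self, fderiv_fun_add hN hN, add_apply] at doubled
  linarith

lemma Sd1_Sd2_eq_Sd2_Sd1 {q : ℝ × ℝ} (hS : ContDiffAt ℝ 2 S q) :
    Sd1 (Sd2 S) q = Sd2 (Sd1 S) q := by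
  have hS' : DifferentiableAt ℝ (fderiv ℝ S) q :=
    (hS.fderiv_right (m := 1) (by norm_num)).differentiableAt one_ne_zero
  have second_derivative (v w : ℝ × ℝ) :
      fderiv ℝ (fun r => fderiv ℝ S r v) q w = fderiv ℝ (fderiv ℝ S) q w v := by
    simp [fderiv_clm_apply hS' (differentiableAt_const v)]
  have symm : IsSymmSndFDerivAt ℝ S q := hS.isSymmSndFDerivAt (by simp)
  calc Sd1 (Sd2 S) q = fderiv ℝ (fderiv ℝ S) q (1, 0) (0, 1) := second_derivative _ _
    _ = fderiv ℝ (fderiv ℝ S) q (0, 1) (1, 0) := symm _ _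
    _ = Sd2 (Sd1 S) q := (second_derivative _ _).symm

lemma fderiv_apply_eq_Sd (S : ℝ × ℝ → ℝ) (q : ℝ × ℝ) (a b : ℝ) :
    fderiv ℝ S q (a, b) = Sd1 S q * a + Sd2 S q * b := by
  have : ((a, b) : ℝ × ℝ) = a • (1, 0) + b • (0, 1) := by simp
  rw [this, map_add, map_smul, map_smul, smul_eq_mul, smul_eq_mul, Sd1, Sd2, mul_comm, mul_comm b]

lemma fderiv_comp₂ (hS : DifferentiableAt ℝ S (f x, g x)) (hf : DifferentiableAt ℝ f x)
    (hg : DifferentiableAt ℝ g x) (v : E) :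
    fderiv ℝ (fun y => S (f y, g y)) x v
      = Sd1 S (f x, g x) * fderiv ℝ f x v + Sd2 S (f x, g x) * fderiv ℝ g x v := by
  have chain := hS.hasFDerivAt.comp x (hf.hasFDerivAt.prodMk hg.hasFDerivAt)
  rw [← fderiv_apply_eq_Sd, show fderiv ℝ (fun y => S (f y, g y)) x = _ from chain.fderiv]
  rfl

lemma deriv_comp₂ {a b : ℝ → ℝ} {t : ℝ} (hS : DifferentiableAt ℝ S (a t, b t))
    (ha : DifferentiableAt ℝ a t) (hb : DifferentiableAt ℝ b t) :
    deriv (fun τ => S (a τ, b τ)) t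
      = Sd1 S (a t, b t) * deriv a t + Sd2 S (a t, b t) * deriv b t := by
  simpa only [fderiv_apply_one_eq_deriv] using fderiv_comp₂ hS ha hb 1

lemma Sd1_const (c : ℝ) : Sd1 (fun _ => c) = fun _ => 0 := by
  ext q; simp [Sd1]

lemma Sd2_const (c : ℝ) : Sd2 (fun _ => c) = fun _ => 0 := by
  ext q; simp [Sd2]

lemma Sd2_fst : Sd2 Prod.fst = fun _ => 0 := by
  ext q; simp [Sd2, fderiv_fst]

lemma Sd1_snd : Sd1 Prod.snd = fun _ => 0 := by
  ext q; simp [Sd1, fderiv_snd]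

lemma Sd2_snd : Sd2 Prod.snd = fun _ => 1 := by
  ext q; simp [Sd2, fderiv_snd]

lemma Sd1_fst_add_snd : Sd1 (fun q => q.1 + q.2) = fun _ => 1 := by
  ext q; simp [Sd1, fderiv_fun_add, fderiv_fst, fderiv_snd]

lemma Sd2_fst_add_snd : Sd2 (fun q => q.1 + q.2) = fun _ => 1 := by
  ext q; simp [Sd2, fderiv_fun_add, fderiv_fst, fderiv_snd]

lemma Sd1_fst_mul_snd : Sd1 (fun q => q.1 * q.2) = Prod.snd := by
  ext q; simp [Sd1, fderiv_fun_mul, fderiv_fst, fderiv_snd]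

lemma Sd2_fst_mul_snd : Sd2 (fun q => q.1 * q.2) = Prod.fst := by
  ext q; simp [Sd2, fderiv_fun_mul, fderiv_fst, fderiv_snd]

end Calculus

section Space

open Topology

variable {ι : Type*} {d : ℕ} {f g : (Fin d → ℝ) → ℝ} {F G : (Fin d → ℝ) → Fin d → ℝ}
  {S : ℝ × ℝ → ℝ} {x : Fin d → ℝ} {i : Fin d}

lemma fderiv_apply_eq_sum_spd (f : (Fin d → ℝ) → ℝ) (x v : Fin d → ℝ) :
    fderiv ℝ f x v = ∑ i, v i * spd f i x := by
  conv_lhs => rw [pi_eq_sum_univ' v]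
  simp [spd]

lemma spd_const (c : ℝ) (i : Fin d) : spd (fun _ => c) i = fun _ => 0 := by
  ext y; simp [spd]

lemma spd_add (hf : DifferentiableAt ℝ f x) (hg : DifferentiableAt ℝ g x) :
    spd (fun y => f y + g y) i x = spd f i x + spd g i x := by
  simp [spd, fderiv_fun_add hf hg]

lemma spd_sub (hf : DifferentiableAt ℝ f x) (hg : DifferentiableAt ℝ g x) :
    spd (fun y => f y - g y) i x = spd f i x - spd g i x := by
  simp [spd, fderiv_fun_sub hf hg]

lemma spd_mul (hf : DifferentiableAt ℝ f x) (hg : DifferentiableAt ℝ g x) :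
    spd (fun y => f y * g y) i x = f x * spd g i x + g x * spd f i x := by
  simp [spd, fderiv_fun_mul hf hg]

lemma spd_comp (hS : DifferentiableAt ℝ S (f x, g x)) (hf : DifferentiableAt ℝ f x)
    (hg : DifferentiableAt ℝ g x) :
    spd (fun y => S (f y, g y)) i x
      = Sd1 S (f x, g x) * spd f i x + Sd2 S (f x, g x) * spd g i x :=
  fderiv_comp₂ hS hf hg _

/-- The inner product `∇f · ∇g` of two spatial gradients. -/
noncomputable def gradInner (f g : (Fin d → ℝ) → ℝ) (x : Fin d → ℝ) : ℝ :=
  ∑ j, spd f j x * spd g j x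

lemma gradInner_comm (f g : (Fin d → ℝ) → ℝ) (x : Fin d → ℝ) : gradInner f g x = gradInner g f x :=
  Finset.sum_congr rfl fun _ _ => mul_comm _ _

lemma gradInner_self_nonneg (f : (Fin d → ℝ) → ℝ) (x : Fin d → ℝ) : 0 ≤ gradInner f f x :=
  Finset.sum_nonneg fun _ _ => mul_self_nonneg _

/-- The squared Frobenius norm `|∇F|²` of the gradient of a vector field, the local rate of viscous
or resistive dissipation. -/
noncomputable def gradNormSq [Fintype ι] (F : (Fin d → ℝ) → ι → ℝ) (x : Fin d → ℝ) : ℝ :=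
  ∑ k, gradInner (fun y => F y k) (fun y => F y k) x

lemma gradNormSq_nonneg [Fintype ι] (F : (Fin d → ℝ) → ι → ℝ) (x : Fin d → ℝ) :
    0 ≤ gradNormSq F x :=
  Finset.sum_nonneg fun _ _ => gradInner_self_nonneg _ x

lemma gradInner_eq_fderiv (f g : (Fin d → ℝ) → ℝ) (x : Fin d → ℝ) :
    gradInner f g x = fderiv ℝ g x fun j => spd f j x :=
  (fderiv_apply_eq_sum_spd g x _).symm

lemma slap_comp (hS : ContDiffAt ℝ 2 S (f x, g x)) (hf : ContDiffAt ℝ 2 f x)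
    (hg : ContDiffAt ℝ 2 g x) :
    slap (fun y => S (f y, g y)) x
      = Sd1 S (f x, g x) * slap f x + Sd2 S (f x, g x) * slap g x
        + (Sd1 (Sd1 S) (f x, g x) * gradInner f f x
          + 2 * Sd2 (Sd1 S) (f x, g x) * gradInner f g x
          + Sd2 (Sd2 S) (f x, g x) * gradInner g g x) := by
  have hf' := hf.differentiableAt two_ne_zero
  have hg' := hg.differentiableAt two_ne_zero
  have hS₁ : DifferentiableAt ℝ (Sd1 S) (f x, g x) := differentiableAt_fderiv_apply hS _
  have hS₂ : DifferentiableAt ℝ (Sd2 S) (f x, g x) := differentiableAt_fderiv_apply hS _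
  have first_order (i : Fin d) : spd (fun y => S (f y, g y)) i =ᶠ[𝓝 x]
      fun y => Sd1 S (f y, g y) * spd f i y + Sd2 S (f y, g y) * spd g i y := by
    have hS_near := (hf.continuousAt.prodMk hg.continuousAt).eventually (hS.eventually (by simp))
    filter_upwards [hS_near, hf.eventually (by simp), hg.eventually (by simp)] with y hSy hfy hgy
    exact spd_comp (hSy.differentiableAt two_ne_zero) (hfy.differentiableAt two_ne_zero)
      (hgy.differentiableAt two_ne_zero)
  have hS₁fg : DifferentiableAt ℝ (fun y => Sd1 S (f y, g y)) x :=
    DifferentiableAt.fun_comp' x hS₁ (hf'.prodMk hg')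
  have hS₂fg : DifferentiableAt ℝ (fun y => Sd2 S (f y, g y)) x :=
    DifferentiableAt.fun_comp' x hS₂ (hf'.prodMk hg')
  simp only [slap, gradInner, Finset.mul_sum, ← Finset.sum_add_distrib]
  refine Finset.sum_congr rfl fun i _ => ?_
  have hfi : DifferentiableAt ℝ (spd f i) x := differentiableAt_fderiv_apply hf _
  have hgi : DifferentiableAt ℝ (spd g i) x := differentiableAt_fderiv_apply hg _
  rw [spd, (first_order i).fderiv_eq, ← spd, spd_add (hS₁fg.fun_mul hfi) (hS₂fg.fun_mul hgi),
    spd_mul hS₁fg hfi, spd_mul hS₂fg hgi, spd_comp hS₁ hf' hg', spd_comp hS₂ hf' hg',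
    Sd1_Sd2_eq_Sd2_Sd1 hS]
  ring

/-- The divergence `∇ · F` of a vector field on `ℝ^d`. -/
noncomputable def sdiv (F : (Fin d → ℝ) → Fin d → ℝ) (x : Fin d → ℝ) : ℝ :=
  ∑ j, spd (fun y => F y j) j x

lemma sdiv_add (hF : ∀ j, DifferentiableAt ℝ (fun y => F y j) x)
    (hG : ∀ j, DifferentiableAt ℝ (fun y => G y j) x) :
    sdiv (fun y j => F y j + G y j) x = sdiv F x + sdiv G x := by
  simp only [sdiv, spd_add (hF _) (hG _), Finset.sum_add_distrib]

lemma sdiv_sub (hF : ∀ j, DifferentiableAt ℝ (fun y => F y j) x)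
    (hG : ∀ j, DifferentiableAt ℝ (fun y => G y j) x) :
    sdiv (fun y j => F y j - G y j) x = sdiv F x - sdiv G x := by
  simp only [sdiv, spd_sub (hF _) (hG _), Finset.sum_sub_distrib]

lemma sdiv_mul (hf : DifferentiableAt ℝ f x) (hF : ∀ j, DifferentiableAt ℝ (fun y => F y j) x) :
    sdiv (fun y j => f y * F y j) x = f x * sdiv F x + fderiv ℝ f x (F x) := by
  simp only [sdiv, spd_mul hf (hF _), Finset.sum_add_distrib, Finset.mul_sum,
    fderiv_apply_eq_sum_spd]

lemma sdiv_ite_eq (f : (Fin d → ℝ) → ℝ) (i : Fin d) (x : Fin d → ℝ) :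
    sdiv (fun y j => if i = j then f y else 0) x = spd f i x := by
  have (j : Fin d) :
      spd (fun y => if i = j then f y else 0) j x = if i = j then spd f j x else 0 := by
    split_ifs <;> simp [spd]
  simp [sdiv, this]

lemma differentiableAt_maxwellT (hF : ∀ k, DifferentiableAt ℝ (fun y => F y k) x) (i j : Fin d) :
    DifferentiableAt ℝ (fun y => maxwellT (F y) i j) x := by
  unfold maxwellT
  split_ifs <;> fun_prop

lemma sdiv_maxwellT (hF : ∀ k, DifferentiableAt ℝ (fun y => F y k) x) (i : Fin d) :
    sdiv (fun y j => maxwellT (F y) i j) x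
      = F x i * sdiv F x + fderiv ℝ (fun y => F y i) x (F x)
        - spd (fun y => halfNormSq (F y)) i x := by
  have hN := differentiableAt_halfNormSq hF
  have hdiag (j : Fin d) :
      DifferentiableAt ℝ (fun y => if i = j then halfNormSq (F y) else 0) x := by
    split_ifs <;> fun_prop
  rw [← sdiv_mul (hF i) hF, ← sdiv_ite_eq]
  exact sdiv_sub (fun j => (hF i).fun_mul (hF j)) hdiag

lemma dotProduct_maxwellT (w b : Fin d → ℝ) (j : Fin d) :
    ∑ k, w k * maxwellT b k j = (w ⬝ᵥ b) * b j - halfNormSq b * w j := by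
  simp [maxwellT, halfNormSq, dotProduct, mul_sub, Finset.sum_mul, mul_assoc, mul_comm (w j)]

lemma gradInner_quadraticForm_nonpos {a b c : ℝ} (ha : a ≤ 0) (hc : c ≤ 0) (hdet : b ^ 2 ≤ a * c)
    (f g : (Fin d → ℝ) → ℝ) (x : Fin d → ℝ) :
    a * gradInner f f x + 2 * b * gradInner f g x + c * gradInner g g x ≤ 0 := by
  simp only [gradInner, Finset.mul_sum, ← Finset.sum_add_distrib]
  exact Finset.sum_nonpos fun j _ => quadraticForm_nonpos ha hc hdet _ _

end Space

section SpaceTime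

variable {ι : Type*} {d : ℕ} {f g ρ : (Fin d → ℝ) → ℝ → ℝ} {S : ℝ × ℝ → ℝ} {ε : ℝ}
  {v x : Fin d → ℝ} {t : ℝ}

/-- Pointwise regularity of a space-time field: `C²` in space and differentiable in time. -/
structure RegularAt (f : (Fin d → ℝ) → ℝ → ℝ) (x : Fin d → ℝ) (t : ℝ) : Prop where
  space : ContDiffAt ℝ 2 (fun y => f y t) x
  time : DifferentiableAt ℝ (f x) t

namespace RegularAt

lemma of_contDiff (hx : ContDiff ℝ 2 fun y => f y t) (ht : ContDiff ℝ 1 (f x)) :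
    RegularAt f x t :=
  ⟨hx.contDiffAt, ht.differentiable one_ne_zero t⟩

lemma differentiableAt (hf : RegularAt f x t) : DifferentiableAt ℝ (fun y => f y t) x :=
  hf.space.differentiableAt two_ne_zero

lemma comp₂ (hS : ContDiffAt ℝ 2 S (f x t, g x t)) (hf : RegularAt f x t) (hg : RegularAt g x t) :
    RegularAt (fun y τ => S (f y τ, g y τ)) x t where
  space := hS.fun_comp x (hf.space.prodMk hg.space)
  time := DifferentiableAt.fun_comp' t (hS.differentiableAt two_ne_zero) (hf.time.prodMk hg.time)

lemma add (hf : RegularAt f x t) (hg : RegularAt g x t) :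
    RegularAt (fun y τ => f y τ + g y τ) x t :=
  comp₂ (contDiff_fst.add contDiff_snd).contDiffAt hf hg

lemma sub (hf : RegularAt f x t) (hg : RegularAt g x t) :
    RegularAt (fun y τ => f y τ - g y τ) x t :=
  comp₂ (contDiff_fst.sub contDiff_snd).contDiffAt hf hg

lemma mul (hf : RegularAt f x t) (hg : RegularAt g x t) :
    RegularAt (fun y τ => f y τ * g y τ) x t :=
  comp₂ (contDiff_fst.mul contDiff_snd).contDiffAt hf hg

lemma div (hf : RegularAt f x t) (hg : RegularAt g x t) (hg₀ : g x t ≠ 0) :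
    RegularAt (fun y τ => f y τ / g y τ) x t :=
  comp₂ (contDiffAt_fst.div contDiffAt_snd hg₀) hf hg

lemma sum {F : ι → (Fin d → ℝ) → ℝ → ℝ} (hF : ∀ k, RegularAt (F k) x t) (s : Finset ι) :
    RegularAt (fun y τ => ∑ k ∈ s, F k y τ) x t where
  space := ContDiffAt.sum fun k _ => (hF k).space
  time := DifferentiableAt.fun_sum fun k _ => (hF k).time

lemma halfNormSq [Fintype ι] {w : (Fin d → ℝ) → ℝ → ι → ℝ}
    (hw : ∀ k, RegularAt (fun y τ => w y τ k) x t) :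
    RegularAt (fun y τ => halfNormSq (w y τ)) x t where
  space := (ContDiffAt.sum fun k _ => (hw k).space.pow 2).div_const 2
  time := (DifferentiableAt.fun_sum fun k _ => (hw k).time.pow 2).div_const 2

end RegularAt

/-- The convection–diffusion operator `∂ₜf + v · ∇f - ε Δf` at `(x, t)`; only the value `v` of the
velocity at that point matters. -/
noncomputable def convDiff (ε : ℝ) (v : Fin d → ℝ) (f : (Fin d → ℝ) → ℝ → ℝ) (x : Fin d → ℝ)
    (t : ℝ) : ℝ :=
  deriv (f x) t + fderiv ℝ (fun y => f y t) x v - ε * slap (fun y => f y t) x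

lemma convDiff_comp (hS : ContDiffAt ℝ 2 S (f x t, g x t)) (hf : RegularAt f x t)
    (hg : RegularAt g x t) :
    convDiff ε v (fun y τ => S (f y τ, g y τ)) x t
      = Sd1 S (f x t, g x t) * convDiff ε v f x t + Sd2 S (f x t, g x t) * convDiff ε v g x t
        - ε * (Sd1 (Sd1 S) (f x t, g x t) * gradInner (fun y => f y t) (fun y => f y t) x
          + 2 * Sd2 (Sd1 S) (f x t, g x t) * gradInner (fun y => f y t) (fun y => g y t) x
          + Sd2 (Sd2 S) (f x t, g x t) * gradInner (fun y => g y t) (fun y => g y t) x) := by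
  have hS' := hS.differentiableAt two_ne_zero
  simp only [convDiff]
  rw [deriv_comp₂ hS' hf.time hg.time,
    fderiv_comp₂ (f := (f · t)) (g := (g · t)) hS' hf.differentiableAt hg.differentiableAt,
    slap_comp (f := (f · t)) (g := (g · t)) hS hf.space hg.space]
  ring

lemma convDiff_add (hf : RegularAt f x t) (hg : RegularAt g x t) :
    convDiff ε v (fun y τ => f y τ + g y τ) x t = convDiff ε v f x t + convDiff ε v g x t := by
  simpa [Sd1_fst_add_snd, Sd2_fst_add_snd, Sd1_const, Sd2_const] using
    convDiff_comp (S := fun q => q.1 + q.2) (contDiff_fst.add contDiff_snd).contDiffAt hf hg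

lemma convDiff_mul (hf : RegularAt f x t) (hg : RegularAt g x t) :
    convDiff ε v (fun y τ => f y τ * g y τ) x t
      = g x t * convDiff ε v f x t + f x t * convDiff ε v g x t
        - 2 * ε * gradInner (fun y => f y t) (fun y => g y t) x := by
  have := convDiff_comp (ε := ε) (v := v) (S := fun q => q.1 * q.2)
    (contDiff_fst.mul contDiff_snd).contDiffAt hf hg
  simp only [Sd1_fst_mul_snd, Sd2_fst_mul_snd, Sd1_snd, Sd2_fst, Sd2_snd] at this
  linarith

lemma convDiff_sum {F : ι → (Fin d → ℝ) → ℝ → ℝ} (hF : ∀ k, RegularAt (F k) x t) (s : Finset ι) :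
    convDiff ε v (fun y τ => ∑ k ∈ s, F k y τ) x t = ∑ k ∈ s, convDiff ε v (F k) x t := by
  classical
  induction s using Finset.induction_on with
  | empty => simp [convDiff, slap, spd_const]
  | insert k s hk ih =>
    simp only [Finset.sum_insert hk, convDiff_add (hF k) (.sum hF s), ih]

lemma convDiff_halfNormSq [Fintype ι] {w : (Fin d → ℝ) → ℝ → ι → ℝ}
    (hw : ∀ k, RegularAt (fun y τ => w y τ k) x t) :
    convDiff ε v (fun y τ => halfNormSq (w y τ)) x t
      = ∑ k, w x t k * convDiff ε v (fun y τ => w y τ k) x t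
        - ε * gradNormSq (fun y => w y t) x := by
  have doubled := convDiff_add (ε := ε) (v := v) (.halfNormSq hw) (.halfNormSq hw)
  simp only [halfNormSq_add_self, dotProduct, convDiff_sum (fun k => (hw k).mul (hw k)),
    convDiff_mul (hw _) (hw _), Finset.sum_sub_distrib, Finset.sum_add_distrib,
    ← Finset.mul_sum] at doubled
  rw [gradNormSq]
  linarith

lemma convDiff_density_mul {δ : ℝ} (hρ : RegularAt ρ x t) (hf : RegularAt f x t)
    (mass : convDiff ε v ρ x t = -(ρ x t * δ)) :
    convDiff ε v (fun y τ => ρ y τ * f y τ) x t + ρ x t * f x t * δ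
      = ρ x t * convDiff ε v f x t
        - 2 * ε * gradInner (fun y => ρ y t) (fun y => f y t) x := by
  linear_combination convDiff_mul (ε := ε) (v := v) hρ hf + f x t * mass

lemma deriv_add_sdiv_mul_sub_slap (ε : ℝ) (f : (Fin d → ℝ) → ℝ → ℝ)
    {F : (Fin d → ℝ) → Fin d → ℝ} (hf : DifferentiableAt ℝ (fun y => f y t) x)
    (hF : ∀ j, DifferentiableAt ℝ (fun y => F y j) x) :
    deriv (f x) t + sdiv (fun y j => f y t * F y j) x - ε * slap (fun y => f y t) x
      = convDiff ε (F x) f x t + f x t * sdiv F x := by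
  rw [sdiv_mul hf hF, convDiff]
  ring

lemma density_mul_advection_sub_sdiv_sub_gradInner (ε : ℝ) (v : Fin d → ℝ)
    (hρ : DifferentiableAt ℝ (fun y => ρ y t) x) (hf : ContDiffAt ℝ 2 (fun y => f y t) x) :
    ρ x t * (deriv (f x) t + ∑ i, v i * spd (fun y => f y t) i x)
        - sdiv (fun y j => ε * ρ y t * spd (fun z => f z t) j y) x
        - ε * gradInner (fun y => ρ y t) (fun y => f y t) x
      = ρ x t * convDiff ε v f x t
        - 2 * ε * gradInner (fun y => ρ y t) (fun y => f y t) x := by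
  have laplacian : sdiv (fun y j => spd (fun z => f z t) j y) x = slap (fun y => f y t) x := rfl
  have hgrad (j : Fin d) : DifferentiableAt ℝ (spd (fun y => f y t) j) x :=
    differentiableAt_fderiv_apply hf _
  rw [sdiv_mul (hρ.const_mul ε) hgrad, fderiv_const_mul hρ, smul_apply,
    smul_eq_mul, ← gradInner_eq_fderiv, gradInner_comm, laplacian, convDiff,
    fderiv_apply_eq_sum_spd]
  ring

end SpaceTime

section MHD

variable {d : ℕ} {ε : ℝ} {ρ e p : (Fin d → ℝ) → ℝ → ℝ} {u B : (Fin d → ℝ) → ℝ → Fin d → ℝ}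
  {S : ℝ × ℝ → ℝ} {x : Fin d → ℝ} {t : ℝ}

/-- The total energy density `E` in terms of the specific internal energy `e` and the velocity `u`,
inverting `specE`. -/
noncomputable def totalEnergy (ρ e : (Fin d → ℝ) → ℝ → ℝ) (u B : (Fin d → ℝ) → ℝ → Fin d → ℝ)
    (x : Fin d → ℝ) (t : ℝ) : ℝ :=
  ρ x t * e x t + ρ x t * halfNormSq (u x t) + halfNormSq (B x t)

/-- The monolithic-regularized ideal MHD system at a space-time point, written in the primitive
variables `ρ, e, u, B`, together with the regularity needed there. -/
structure RegularizedMHDAt (ε : ℝ) (ρ e p : (Fin d → ℝ) → ℝ → ℝ)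
    (u B : (Fin d → ℝ) → ℝ → Fin d → ℝ) (x : Fin d → ℝ) (t : ℝ) : Prop where
  regular_density : RegularAt ρ x t
  regular_internalEnergy : RegularAt e x t
  regular_velocity (i : Fin d) : RegularAt (fun y τ => u y τ i) x t
  regular_field (i : Fin d) : RegularAt (fun y τ => B y τ i) x t
  differentiableAt_pressure : DifferentiableAt ℝ (fun y => p y t) x
  sdiv_field : sdiv (fun y => B y t) x = 0
  mass : deriv (fun τ => ρ x τ) t + sdiv (fun y j => ρ y t * u y t j) x
    = ε * slap (fun y => ρ y t) x
  momentum (i : Fin d) : deriv (fun τ => ρ x τ * u x τ i) t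
      + sdiv (fun y j => ρ y t * u y t i * u y t j + (if i = j then p y t else 0)
          - maxwellT (B y t) i j) x
    = ε * slap (fun y => ρ y t * u y t i) x
  energy : deriv (fun τ => totalEnergy ρ e u B x τ) t
      + sdiv (fun y j => u y t j * (totalEnergy ρ e u B y t + p y t)
          - ∑ k, u y t k * maxwellT (B y t) k j) x
    = ε * slap (fun y => totalEnergy ρ e u B y t) x
  magnetic (i : Fin d) : deriv (fun τ => B x τ i) t
      + sdiv (fun y j => u y t j * B y t i - B y t j * u y t i) x
    = ε * slap (fun y => B y t i) x

namespace RegularizedMHDAt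

variable (h : RegularizedMHDAt ε ρ e p u B x t)
include h

lemma convDiff_density :
    convDiff ε (u x t) ρ x t = -(ρ x t * sdiv (fun y => u y t) x) := by
  linear_combination h.mass - deriv_add_sdiv_mul_sub_slap ε ρ
    h.regular_density.differentiableAt fun j => (h.regular_velocity j).differentiableAt

lemma density_mul_convDiff_velocity (i : Fin d) :
    ρ x t * convDiff ε (u x t) (fun y τ => u y τ i) x t
      = 2 * ε * gradInner (fun y => ρ y t) (fun y => u y t i) x
        - spd (fun y => p y t) i x - spd (fun y => halfNormSq (B y t)) i x
        + fderiv ℝ (fun y => B y t i) x (B x t) := by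
  have hu k := (h.regular_velocity k).differentiableAt
  have hB k := (h.regular_field k).differentiableAt
  have hm := h.regular_density.mul (h.regular_velocity i)
  have hmu j := hm.differentiableAt.fun_mul (hu j)
  have hp (j : Fin d) : DifferentiableAt ℝ (fun y => if i = j then p y t else 0) x := by
    split_ifs <;> simp [h.differentiableAt_pressure]
  have flux : sdiv (fun y j => ρ y t * u y t i * u y t j + (if i = j then p y t else 0)
        - maxwellT (B y t) i j) x
      = sdiv (fun y j => ρ y t * u y t i * u y t j) x + spd (fun y => p y t) i x
        - fderiv ℝ (fun y => B y t i) x (B x t) + spd (fun y => halfNormSq (B y t)) i x := by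
    rw [sdiv_sub (fun j => (hmu j).fun_add (hp j)) fun j => differentiableAt_maxwellT hB i j,
      sdiv_add hmu hp, sdiv_ite_eq, sdiv_maxwellT hB, h.sdiv_field]
    ring
  linear_combination h.momentum i - flux
    - deriv_add_sdiv_mul_sub_slap ε (fun y τ => ρ y τ * u y τ i) hm.differentiableAt hu
    - convDiff_density_mul h.regular_density (h.regular_velocity i) h.convDiff_density

lemma convDiff_field (i : Fin d) :
    convDiff ε (u x t) (fun y τ => B y τ i) x t
      = fderiv ℝ (fun y => u y t i) x (B x t) - B x t i * sdiv (fun y => u y t) x := by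
  have hu k := (h.regular_velocity k).differentiableAt
  have hB k := (h.regular_field k).differentiableAt
  have flux : sdiv (fun y j => u y t j * B y t i - B y t j * u y t i) x
      = sdiv (fun y j => B y t i * u y t j) x - fderiv ℝ (fun y => u y t i) x (B x t) := by
    simp only [mul_comm _ (B _ t i), mul_comm _ (u _ t i)]
    rw [sdiv_sub (fun j => (hB i).fun_mul (hu j)) fun j => (hu i).fun_mul (hB j),
      sdiv_mul (hu i) hB, h.sdiv_field]
    ring
  linear_combination h.magnetic i - flux
    - deriv_add_sdiv_mul_sub_slap ε (fun y τ => B y τ i) (hB i) hu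

lemma density_mul_convDiff_kineticEnergy :
    ρ x t * convDiff ε (u x t) (fun y τ => halfNormSq (u y τ)) x t
      = 2 * ε * gradInner (fun y => ρ y t) (fun y => halfNormSq (u y t)) x
        - fderiv ℝ (fun y => p y t) x (u x t) - fderiv ℝ (fun y => halfNormSq (B y t)) x (u x t)
        + ∑ k, u x t k * fderiv ℝ (fun y => B y t k) x (B x t)
        - ε * ρ x t * gradNormSq (fun y => u y t) x := by
  rw [convDiff_halfNormSq h.regular_velocity, gradInner_eq_fderiv,
    fderiv_halfNormSq fun k => (h.regular_velocity k).differentiableAt]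
  simp only [← gradInner_eq_fderiv]
  rw [fderiv_apply_eq_sum_spd (fun y => p y t),
    fderiv_apply_eq_sum_spd (fun y => halfNormSq (B y t))]
  have work : ∑ k, u x t k * (ρ x t * convDiff ε (u x t) (fun y τ => u y τ k) x t)
      = ∑ k, u x t k * (2 * ε * gradInner (fun y => ρ y t) (fun y => u y t k) x
        - spd (fun y => p y t) k x - spd (fun y => halfNormSq (B y t)) k x
        + fderiv ℝ (fun y => B y t k) x (B x t)) := by
    simp only [h.density_mul_convDiff_velocity]
  simp only [mul_add, mul_sub, Finset.sum_add_distrib, Finset.sum_sub_distrib,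
    mul_left_comm _ (ρ x t), mul_left_comm _ (2 * ε), ← Finset.mul_sum] at work
  linear_combination work

lemma convDiff_magneticEnergy :
    convDiff ε (u x t) (fun y τ => halfNormSq (B y τ)) x t
      = ∑ k, B x t k * fderiv ℝ (fun y => u y t k) x (B x t)
        - 2 * halfNormSq (B x t) * sdiv (fun y => u y t) x
        - ε * gradNormSq (fun y => B y t) x := by
  have norm_sq := halfNormSq_add_self (B x t)
  rw [dotProduct] at norm_sq
  simp only [convDiff_halfNormSq h.regular_field, h.convDiff_field, mul_sub,
    Finset.sum_sub_distrib, ← mul_assoc, ← Finset.sum_mul, ← norm_sq]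
  ring

lemma regular_totalEnergy : RegularAt (totalEnergy ρ e u B) x t :=
  ((h.regular_density.mul h.regular_internalEnergy).add
    (h.regular_density.mul (.halfNormSq h.regular_velocity))).add (.halfNormSq h.regular_field)

lemma convDiff_totalEnergy :
    convDiff ε (u x t) (totalEnergy ρ e u B) x t
      = fderiv ℝ (fun y => u y t ⬝ᵥ B y t) x (B x t)
        - (totalEnergy ρ e u B x t + p x t + halfNormSq (B x t)) * sdiv (fun y => u y t) x
        - fderiv ℝ (fun y => p y t) x (u x t)
        - fderiv ℝ (fun y => halfNormSq (B y t)) x (u x t) := by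
  have hu k := (h.regular_velocity k).differentiableAt
  have hB k := (h.regular_field k).differentiableAt
  have hE := h.regular_totalEnergy.differentiableAt
  have hp := h.differentiableAt_pressure
  have hM := differentiableAt_halfNormSq hB
  have huB : DifferentiableAt ℝ (fun y => u y t ⬝ᵥ B y t) x :=
    DifferentiableAt.fun_sum fun k _ => (hu k).fun_mul (hB k)
  have flux : sdiv (fun y j => u y t j * (totalEnergy ρ e u B y t + p y t)
        - ∑ k, u y t k * maxwellT (B y t) k j) x
      = sdiv (fun y j => totalEnergy ρ e u B y t * u y t j) x
        + (p x t + halfNormSq (B x t)) * sdiv (fun y => u y t) x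
        + fderiv ℝ (fun y => p y t) x (u x t)
        + fderiv ℝ (fun y => halfNormSq (B y t)) x (u x t)
        - fderiv ℝ (fun y => u y t ⬝ᵥ B y t) x (B x t) := by
    simp only [dotProduct_maxwellT, mul_comm (u _ t _) (_ + _), add_mul]
    rw [sdiv_sub (fun j => (hE.fun_mul (hu j)).fun_add (hp.fun_mul (hu j))) fun j =>
        (huB.fun_mul (hB j)).fun_sub (hM.fun_mul (hu j)),
      sdiv_add (fun j => hE.fun_mul (hu j)) fun j => hp.fun_mul (hu j),
      sdiv_sub (fun j => huB.fun_mul (hB j)) fun j => hM.fun_mul (hu j),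
      sdiv_mul hp hu, sdiv_mul huB hB, sdiv_mul hM hu, h.sdiv_field]
    ring
  linear_combination h.energy - flux - deriv_add_sdiv_mul_sub_slap ε _ hE hu

lemma density_mul_convDiff_internalEnergy :
    ρ x t * convDiff ε (u x t) e x t
      = 2 * ε * gradInner (fun y => ρ y t) (fun y => e y t) x
        - p x t * sdiv (fun y => u y t) x
        + ε * (ρ x t * gradNormSq (fun y => u y t) x + gradNormSq (fun y => B y t) x) := by
  have hK : RegularAt (fun y τ => halfNormSq (u y τ)) x t := .halfNormSq h.regular_velocity
  have hρe := h.regular_density.mul h.regular_internalEnergy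
  have hρK := h.regular_density.mul hK
  have energy := h.convDiff_totalEnergy
  have split : convDiff ε (u x t) (totalEnergy ρ e u B) x t = _ :=
    (convDiff_add (hρe.add hρK) (.halfNormSq h.regular_field)).trans
      (congrArg (· + _) (convDiff_add hρe hρK))
  rw [split, fderiv_dotProduct (fun k => (h.regular_velocity k).differentiableAt)
    fun k => (h.regular_field k).differentiableAt, totalEnergy] at energy
  linear_combination energy - h.convDiff_magneticEnergy - h.density_mul_convDiff_kineticEnergy
    - convDiff_density_mul h.regular_density h.regular_internalEnergy h.convDiff_density
    - convDiff_density_mul h.regular_density hK h.convDiff_density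

lemma entropy_balance (hS : ContDiffAt ℝ 2 S (ρ x t, e x t))
    (eos : p x t * Sd2 S (ρ x t, e x t) + ρ x t ^ 2 * Sd1 S (ρ x t, e x t) = 0) :
    ρ x t * convDiff ε (u x t) (fun y τ => S (ρ y τ, e y τ)) x t
        - 2 * ε * gradInner (fun y => ρ y t) (fun y => S (ρ y t, e y t)) x
      = ε * Sd2 S (ρ x t, e x t)
          * (ρ x t * gradNormSq (fun y => u y t) x + gradNormSq (fun y => B y t) x)
        - ε * ((ρ x t * Sd1 (Sd1 S) (ρ x t, e x t) + 2 * Sd1 S (ρ x t, e x t))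
            * gradInner (fun y => ρ y t) (fun y => ρ y t) x
          + 2 * (ρ x t * Sd2 (Sd1 S) (ρ x t, e x t))
            * gradInner (fun y => ρ y t) (fun y => e y t) x
          + ρ x t * Sd2 (Sd2 S) (ρ x t, e x t)
            * gradInner (fun y => e y t) (fun y => e y t) x) := by
  rw [convDiff_comp hS h.regular_density h.regular_internalEnergy, h.convDiff_density,
    gradInner_eq_fderiv (g := fun y => S (ρ y t, e y t)),
    fderiv_comp₂ (f := (ρ · t)) (g := (e · t)) (hS.differentiableAt two_ne_zero)
      h.regular_density.differentiableAt h.regular_internalEnergy.differentiableAt]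
  simp only [← gradInner_eq_fderiv]
  linear_combination Sd2 S (ρ x t, e x t) * h.density_mul_convDiff_internalEnergy
    - sdiv (fun y => u y t) x * eos

theorem entropy_production_nonneg (hε : 0 ≤ ε) (hρ : 0 < ρ x t)
    (hS : ContDiffAt ℝ 2 S (ρ x t, e x t))
    (eos : p x t * Sd2 S (ρ x t, e x t) + ρ x t ^ 2 * Sd1 S (ρ x t, e x t) = 0)
    (hSe : 0 ≤ Sd2 S (ρ x t, e x t))
    (hconv₁ : ρ x t ^ 2 * Sd1 (Sd1 S) (ρ x t, e x t) + 2 * ρ x t * Sd1 S (ρ x t, e x t) ≤ 0)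
    (hconv₂ : Sd2 (Sd2 S) (ρ x t, e x t) ≤ 0)
    (hconv₃ : ρ x t ^ 2 * Sd2 (Sd1 S) (ρ x t, e x t) ^ 2
      ≤ (ρ x t ^ 2 * Sd1 (Sd1 S) (ρ x t, e x t) + 2 * ρ x t * Sd1 S (ρ x t, e x t))
        * Sd2 (Sd2 S) (ρ x t, e x t)) :
    0 ≤ ρ x t * (deriv (fun τ => S (ρ x τ, e x τ)) t
          + ∑ i, u x t i * spd (fun y => S (ρ y t, e y t)) i x)
        - sdiv (fun y j => ε * ρ y t * spd (fun z => S (ρ z t, e z t)) j y) x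
        - ε * gradInner (fun y => ρ y t) (fun y => S (ρ y t, e y t)) x := by
  have hs : RegularAt (fun y τ => S (ρ y τ, e y τ)) x t :=
    .comp₂ hS h.regular_density h.regular_internalEnergy
  rw [density_mul_advection_sub_sdiv_sub_gradInner (f := fun y τ => S (ρ y τ, e y τ)) ε (u x t)
    h.regular_density.differentiableAt hs.space, h.entropy_balance hS eos]
  have viscous_resistive : 0 ≤
      ρ x t * gradNormSq (fun y => u y t) x + gradNormSq (fun y => B y t) x :=
    add_nonneg (mul_nonneg hρ.le (gradNormSq_nonneg _ _)) (gradNormSq_nonneg _ _)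
  have thermal := gradInner_quadraticForm_nonpos
    (a := ρ x t * Sd1 (Sd1 S) (ρ x t, e x t) + 2 * Sd1 S (ρ x t, e x t))
    (b := ρ x t * Sd2 (Sd1 S) (ρ x t, e x t)) (c := ρ x t * Sd2 (Sd2 S) (ρ x t, e x t))
    (nonpos_of_mul_nonpos_right (by linarith) hρ) (mul_nonpos_of_nonneg_of_nonpos hρ.le hconv₂)
    (by linarith) (fun y => ρ y t) (fun y => e y t) x
  exact sub_nonneg.2 ((mul_nonpos_of_nonneg_of_nonpos hε thermal).trans
    (mul_nonneg (mul_nonneg hε hSe) viscous_resistive))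

end RegularizedMHDAt

lemma specE_eq (ρ E : (Fin d → ℝ) → ℝ → ℝ) (m B : (Fin d → ℝ) → ℝ → Fin d → ℝ) :
    specE ρ E m B = fun x t =>
      (E x t - ρ x t * halfNormSq (fun i => m x t i / ρ x t) - halfNormSq (B x t)) / ρ x t := by
  ext x t
  rw [specE, mul_div_assoc]
  rfl

lemma RegularAt.specE {E : (Fin d → ℝ) → ℝ → ℝ} {m : (Fin d → ℝ) → ℝ → Fin d → ℝ}
    (hρ : RegularAt ρ x t) (hρ₀ : ρ x t ≠ 0) (hE : RegularAt E x t)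
    (hm : ∀ i, RegularAt (fun y τ => m y τ i) x t) (hB : ∀ i, RegularAt (fun y τ => B y τ i) x t) :
    RegularAt (specE ρ E m B) x t := by
  rw [specE_eq]
  exact ((hE.sub (hρ.mul (.halfNormSq fun i => (hm i).div hρ hρ₀))).sub (.halfNormSq hB)).div hρ hρ₀

lemma totalEnergy_specE (hρ : ∀ x t, ρ x t ≠ 0) (E : (Fin d → ℝ) → ℝ → ℝ)
    (m B : (Fin d → ℝ) → ℝ → Fin d → ℝ) :
    totalEnergy ρ (specE ρ E m B) (fun x t i => m x t i / ρ x t) B = E := by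
  ext x t
  rw [totalEnergy, specE_eq, mul_div_cancel₀ _ (hρ x t)]
  ring

end MHD

/-- for smooth positive-density solutions of the monolithic-regularized ideal
MHD system with `∇·B = 0`, equation of state `p S_e + ρ² S_ρ = 0`, positive temperature
`S_e > 0` and strict convexity of `−S` in `(ρ⁻¹,e)` along the solution, the entropy field
`s = S(ρ,e)` satisfies `ρ(∂ₜs + u·∇s) − ∇·(ερ∇s) − ε∇ρ·∇s ≥ 0` pointwise. -/
theorem stmt_9 {d : ℕ} (hd : 1 ≤ d) (ε : ℝ) (hε : 0 < ε)
    (ρ E p : (Fin d → ℝ) → ℝ → ℝ) (m B : (Fin d → ℝ) → ℝ → Fin d → ℝ)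
    (S : ℝ × ℝ → ℝ) (hS : ContDiff ℝ 2 S)
    (hρpos : ∀ x t, 0 < ρ x t)
    (hρx : ∀ t, ContDiff ℝ 2 fun x => ρ x t) (hρt : ∀ x, ContDiff ℝ 1 fun t => ρ x t)
    (hmx : ∀ t i, ContDiff ℝ 2 fun x => m x t i) (hmt : ∀ x i, ContDiff ℝ 1 fun t => m x t i)
    (hEx : ∀ t, ContDiff ℝ 2 fun x => E x t) (hEt : ∀ x, ContDiff ℝ 1 fun t => E x t)
    (hBx : ∀ t i, ContDiff ℝ 2 fun x => B x t i) (hBt : ∀ x i, ContDiff ℝ 1 fun t => B x t i)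
    (hpx : ∀ t, ContDiff ℝ 1 fun x => p x t)
    (heos : ∀ (x : Fin d → ℝ) (t : ℝ), 0 < t →
      p x t * Sd2 S (ρ x t, specE ρ E m B x t)
        + (ρ x t) ^ 2 * Sd1 S (ρ x t, specE ρ E m B x t) = 0)
    (hSe : ∀ (x : Fin d → ℝ) (t : ℝ), 0 < t →
      0 < Sd2 S (ρ x t, specE ρ E m B x t))
    (hconv1 : ∀ (x : Fin d → ℝ) (t : ℝ), 0 < t →
      (ρ x t) ^ 2 * Sd1 (Sd1 S) (ρ x t, specE ρ E m B x t)
        + 2 * ρ x t * Sd1 S (ρ x t, specE ρ E m B x t) < 0)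
    (hconv2 : ∀ (x : Fin d → ℝ) (t : ℝ), 0 < t →
      Sd2 (Sd2 S) (ρ x t, specE ρ E m B x t) < 0)
    (hconv3 : ∀ (x : Fin d → ℝ) (t : ℝ), 0 < t →
      ((ρ x t) ^ 2 * Sd1 (Sd1 S) (ρ x t, specE ρ E m B x t)
            + 2 * ρ x t * Sd1 S (ρ x t, specE ρ E m B x t))
          * Sd2 (Sd2 S) (ρ x t, specE ρ E m B x t)
        - (ρ x t) ^ 2 * (Sd2 (Sd1 S) (ρ x t, specE ρ E m B x t)) ^ 2 > 0)
    (hdivB : ∀ (x : Fin d → ℝ) (t : ℝ), 0 < t → (∑ j, spd (fun y => B y t j) j x) = 0)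
    (hmass : ∀ (x : Fin d → ℝ) (t : ℝ), 0 < t →
      deriv (fun τ => ρ x τ) t + (∑ j, spd (fun y => m y t j) j x)
        = ε * slap (fun y => ρ y t) x)
    (hmom : ∀ (x : Fin d → ℝ) (t : ℝ), 0 < t → ∀ i,
      deriv (fun τ => m x τ i) t
        + (∑ j, spd (fun y => m y t i * (m y t j / ρ y t)
            + (if i = j then p y t else 0) - maxwellT (B y t) i j) j x)
        = ε * slap (fun y => m y t i) x)
    (hener : ∀ (x : Fin d → ℝ) (t : ℝ), 0 < t →
      deriv (fun τ => E x τ) t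
        + (∑ j, spd (fun y => (m y t j / ρ y t) * (E y t + p y t)
            - ∑ k, (m y t k / ρ y t) * maxwellT (B y t) k j) j x)
        = ε * slap (fun y => E y t) x)
    (hind : ∀ (x : Fin d → ℝ) (t : ℝ), 0 < t → ∀ i,
      deriv (fun τ => B x τ i) t
        + (∑ j, spd (fun y => (m y t j / ρ y t) * B y t i - B y t j * (m y t i / ρ y t)) j x)
        = ε * slap (fun y => B y t i) x) :
    ∀ (x : Fin d → ℝ) (t : ℝ), 0 < t →
      ρ x t * (deriv (fun τ => S (ρ x τ, specE ρ E m B x τ)) t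
          + ∑ i, (m x t i / ρ x t) * spd (fun y => S (ρ y t, specE ρ E m B y t)) i x)
        - (∑ j, spd (fun y => ε * ρ y t * spd (fun z => S (ρ z t, specE ρ E m B z t)) j y) j x)
        - ε * (∑ j, spd (fun y => ρ y t) j x
            * spd (fun y => S (ρ y t, specE ρ E m B y t)) j x) ≥ 0 := by
  intro x t ht
  have hρ₀ (y : Fin d → ℝ) (τ : ℝ) : ρ y τ ≠ 0 := (hρpos y τ).ne'
  have hρ : RegularAt ρ x t := .of_contDiff (hρx t) (hρt x)
  have hE : RegularAt E x t := .of_contDiff (hEx t) (hEt x)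
  have hm (i : Fin d) : RegularAt (fun y τ => m y τ i) x t := .of_contDiff (hmx t i) (hmt x i)
  have hB (i : Fin d) : RegularAt (fun y τ => B y τ i) x t := .of_contDiff (hBx t i) (hBt x i)
  have momentum (y : Fin d → ℝ) (τ : ℝ) (i : Fin d) : ρ y τ * (m y τ i / ρ y τ) = m y τ i :=
    mul_div_cancel₀ _ (hρ₀ y τ)
  have mhd : RegularizedMHDAt ε ρ (specE ρ E m B) p (fun y τ i => m y τ i / ρ y τ) B x t :=
    { regular_density := hρ
      regular_internalEnergy := hρ.specE (hρ₀ x t) hE hm hB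
      regular_velocity := fun i => (hm i).div hρ (hρ₀ x t)
      regular_field := hB
      differentiableAt_pressure := (hpx t).contDiffAt.differentiableAt one_ne_zero
      sdiv_field := hdivB x t ht
      mass := by simpa only [momentum, sdiv] using hmass x t ht
      momentum := by simpa only [momentum, sdiv] using hmom x t ht
      energy := by simpa only [totalEnergy_specE hρ₀, sdiv] using hener x t ht
      magnetic := hind x t ht }
  exact mhd.entropy_production_nonneg hε.le (hρpos x t) hS.contDiffAt (heos x t ht)
    (hSe x t ht).le (hconv1 x t ht).le (hconv2 x t ht).le (sub_nonneg.1 (hconv3 x t ht).le)
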